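/- Define E(t,x) := e^{i x²/(4t)} / √(4π i t) for real t ≠ 0 and x ∈ ℝ. Then for every integer k ≥ 1 and all (t,x) with t ≠ 0, the time derivatives of ∂_x E satisfy the recurrence ∂_t^{k+1} ∂_x E(t,x) = −1/(4t²) · [ (i x² + 2t(4k+3)) · ∂_t^k ∂_x E(t,x) + 2k(2k+1) · ∂_t^{k−1} ∂_x E(t,x) ]. -/

import Mathlib

open MeasureTheory Complex Real Set Filter

/-- The fundamental solution `E(t,x) = e^{i x²/(4t)} / √(4π i t)` of the 1D Schrödinger
equation, the complex square root being the principal branch. -/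
noncomputable def E (t x : ℝ) : ℂ :=
  Complex.exp (Complex.I * (x : ℂ) ^ 2 / (4 * (t : ℂ))) /
    ((4 * (Real.pi : ℂ) * Complex.I * (t : ℂ)) ^ ((1 : ℂ) / 2))

/-- The odd extension of `θ₀ : (0,1) → ℂ` to `ℝ`. -/
noncomputable def thetaOdd (θ₀ : ℝ → ℂ) (x : ℝ) : ℂ :=
  if 0 < x ∧ x < 1 then θ₀ x else if -1 < x ∧ x < 0 then -θ₀ (-x) else 0

/-- `θ⁻(t,x) = ∫_{-1}^1 E(t, x-y) θ₀^odd(y) dy`. -/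
noncomputable def thetaMinus (θ₀ : ℝ → ℂ) (t x : ℝ) : ℂ :=
  ∫ y in Set.Ioo (-1 : ℝ) 1, E t (x - y) * thetaOdd θ₀ y


theorem E_dx (t : ℝ) (x : ℝ) :
    deriv (fun x' => E t x') x = Complex.I * (x : ℂ) / (2 * (t : ℂ)) * E t x := by
  have h1 : HasDerivAt (fun x' : ℝ => (x' : ℂ)) 1 x := Complex.ofRealCLM.hasDerivAt
  have h := ((((h1.pow 2).const_mul Complex.I).div_const (4 * (t : ℂ))).cexp).div_const
    ((4 * (Real.pi : ℂ) * Complex.I * (t : ℂ)) ^ ((1 : ℂ) / 2))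
  refine h.deriv.trans ?_
  simp only [E]
  by_cases ht : (t : ℂ) = 0
  · simp [ht]
  · push_cast
    simp
    ring

theorem E_dt (t : ℝ) (ht : t ≠ 0) (x : ℝ) :
    HasDerivAt (fun t' => E t' x)
      ((-Complex.I * (x : ℂ) ^ 2 / (4 * (t : ℂ) ^ 2) - 1 / (2 * (t : ℂ))) * E t x) t := by
  have htc : (t : ℂ) ≠ 0 := by exact_mod_cast ht
  have hpi : (Real.pi : ℂ) ≠ 0 := by exact_mod_cast Real.pi_ne_zero
  have h1 : HasDerivAt (fun x' : ℝ => (x' : ℂ)) 1 t := Complex.ofRealCLM.hasDerivAt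
  have hz : (4 * (Real.pi : ℂ) * Complex.I * (t : ℂ)) ≠ 0 := by
    simp [ht, Real.pi_ne_zero]
  have hs : (4 * (Real.pi : ℂ) * Complex.I * (t : ℂ)) ∈ Complex.slitPlane := by
    right
    simp [ht, Real.pi_ne_zero]
  have hc : HasDerivAt (fun t' : ℝ => (4 * (Real.pi : ℂ) * Complex.I * (t' : ℂ)) ^ ((1 : ℂ) / 2))
      _ t := (((hasDerivAt_id (t : ℂ)).const_mul (4 * (Real.pi : ℂ) * Complex.I)).cpow_const
        (c := (1 : ℂ) / 2) hs).comp_ofReal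
  have hne : (4 * (Real.pi : ℂ) * Complex.I * (t : ℂ)) ^ ((1 : ℂ) / 2) ≠ 0 := by
    simp [Complex.cpow_eq_zero_iff, ht, Real.pi_ne_zero]
  have h4 : (4 : ℂ) ≠ 0 := by norm_num
  have he := ((hasDerivAt_const t (Complex.I * (x : ℂ) ^ 2)).div (h1.const_mul 4)
    (mul_ne_zero h4 htc)).cexp
  have h := he.div hc hne
  refine h.congr_deriv ?_
  simp only [E, Pi.div_apply, id]
  rw [Complex.cpow_sub _ _ hz, Complex.cpow_one]
  have hI := Complex.I_ne_zero
  generalize (4 * (Real.pi : ℂ) * Complex.I * (t : ℂ)) ^ ((1 : ℂ) / 2) = w at *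
  generalize Complex.exp _ = e
  field_simp
  ring

theorem G_dt (t : ℝ) (ht : t ≠ 0) (x : ℝ) :
    HasDerivAt (fun t' => deriv (fun x' => E t' x') x)
      (-1 / (4 * (t : ℂ) ^ 2) * ((Complex.I * (x : ℂ) ^ 2 + 6 * (t : ℂ)) *
        deriv (fun x' => E t x') x)) t := by
  have htc : (t : ℂ) ≠ 0 := by exact_mod_cast ht
  have h1 : HasDerivAt (fun x' : ℝ => (x' : ℂ)) 1 t := Complex.ofRealCLM.hasDerivAt
  simp only [E_dx]
  have h := ((hasDerivAt_const t (Complex.I * (x : ℂ))).div (h1.const_mul 2)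
    (mul_ne_zero two_ne_zero htc)).mul (E_dt t ht x)
  refine h.congr_deriv ?_
  simp only [Pi.div_apply]
  field_simp
  ring

theorem G_rec (x : ℝ) (G : ℝ → ℂ)
    (hG : ∀ t : ℝ, t ≠ 0 → HasDerivAt G
      (-1 / (4 * (t : ℂ) ^ 2) * ((Complex.I * (x : ℂ) ^ 2 + 6 * (t : ℂ)) * G t)) t) (k : ℕ) :
    ∀ t : ℝ, t ≠ 0 →
      HasDerivAt (iteratedDeriv k G) (iteratedDeriv (k + 1) G t) t ∧
      HasDerivAt (iteratedDeriv (k + 1) G) (-1 / (4 * (t : ℂ) ^ 2) *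
        ((Complex.I * (x : ℂ) ^ 2 + 2 * (t : ℂ) * (4 * ((k + 1 : ℕ) : ℂ) + 3)) *
          iteratedDeriv (k + 1) G t
          + 2 * ((k + 1 : ℕ) : ℂ) * (2 * ((k + 1 : ℕ) : ℂ) + 1) * iteratedDeriv k G t)) t := by
  have key : ∀ t : ℝ, t ≠ 0 → ∀ (a b A B : ℂ) (U V W : ℝ → ℂ),
      HasDerivAt U A t → HasDerivAt V B t →
      (∀ s : ℝ, s ≠ 0 → W s = -1 / (4 * (s : ℂ) ^ 2) *
        ((Complex.I * (x : ℂ) ^ 2 + a * (s : ℂ)) * V s + b * U s)) →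
      HasDerivAt W (-1 / (4 * (t : ℂ) ^ 2) * ((Complex.I * (x : ℂ) ^ 2 + a * (t : ℂ)) * B
        + a * V t + b * A + 8 * t * W t)) t := by
    intro t ht a b A B U V W hU hV hW
    have htc : (t : ℂ) ≠ 0 := by exact_mod_cast ht
    have h1 : HasDerivAt (fun x' : ℝ => (x' : ℂ)) 1 t := Complex.ofRealCLM.hasDerivAt
    have h4 : (4 : ℂ) ≠ 0 := by norm_num
    have h := ((hasDerivAt_const t (-1 : ℂ)).div ((h1.pow 2).const_mul 4)
      (mul_ne_zero h4 (pow_ne_zero 2 htc))).mul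
      ((((h1.const_mul a).const_add (Complex.I * (x : ℂ) ^ 2)).mul hV).add (hU.const_mul b))
    have hev : W =ᶠ[nhds t] _ := (eventually_ne_nhds ht).mono hW
    refine (HasDerivAt.congr_of_eventuallyEq h hev).congr_deriv ?_
    rw [hW t ht]
    simp
    field_simp
    ring
  induction k with
  | zero =>
    intro t ht
    have hd : ∀ s : ℝ, s ≠ 0 → HasDerivAt G (iteratedDeriv 1 G s) s := by
      intro s hs
      rw [iteratedDeriv_one]
      exact (hG s hs).differentiableAt.hasDerivAt
    refine ⟨by simpa using hd t ht, ?_⟩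
    have h := key t ht 6 0 _ _ G G (iteratedDeriv 1 G) (hd t ht) (hd t ht) (by
      intro s hs
      rw [iteratedDeriv_one, (hG s hs).deriv]
      ring)
    refine h.congr_deriv ?_
    simp only [iteratedDeriv_zero, zero_add]
    push_cast
    ring
  | succ k ih =>
    intro t ht
    have hd : ∀ s : ℝ, s ≠ 0 → HasDerivAt (iteratedDeriv (k + 1) G)
        (iteratedDeriv (k + 1 + 1) G s) s := by
      intro s hs
      rw [iteratedDeriv_succ (n := k + 1)]
      exact (ih s hs).2.differentiableAt.hasDerivAt
    refine ⟨hd t ht, ?_⟩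
    have h := key t ht (2 * (4 * ((k + 1 : ℕ) : ℂ) + 3))
      (2 * ((k + 1 : ℕ) : ℂ) * (2 * ((k + 1 : ℕ) : ℂ) + 1)) _ _ _ _
      (iteratedDeriv (k + 1 + 1) G) (ih t ht).1 (hd t ht) (by
      intro s hs
      rw [iteratedDeriv_succ (n := k + 1), (ih s hs).2.deriv]
      ring)
    refine h.congr_deriv ?_
    push_cast
    ring

theorem stmt18 (k : ℕ) (hk : 1 ≤ k) (t : ℝ) (ht : t ≠ 0) (x : ℝ) :
    -- ∂_t^{k+1} ∂_x E = -1/(4t²) [ (i x² + 2t(4k+3)) ∂_t^k ∂_x E + 2k(2k+1) ∂_t^{k-1} ∂_x E ]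
    iteratedDeriv (k + 1) (fun t' => deriv (fun x' => E t' x') x) t
      = -1 / (4 * (t : ℂ) ^ 2) *
          ((Complex.I * (x : ℂ) ^ 2 + 2 * (t : ℂ) * (4 * (k : ℂ) + 3)) *
              iteratedDeriv k (fun t' => deriv (fun x' => E t' x') x) t
            + 2 * (k : ℂ) * (2 * (k : ℂ) + 1) *
              iteratedDeriv (k - 1) (fun t' => deriv (fun x' => E t' x') x) t) := by
  obtain ⟨m, rfl⟩ : ∃ m, k = m + 1 := ⟨k - 1, by omega⟩
  have h := (G_rec x _ (fun s hs => G_dt s hs x) m t ht).2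
  rw [iteratedDeriv_succ (n := m + 1), h.deriv]
  simp
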